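/- arXiv:1403.0180 — 8 statements merged into one kernel-verified Lean document; each statement's English description precedes it below -/
import Mathlib

section
/- For every triple (x, y, z) of positive real numbers, there exists a unique triple (x', y', z') of positive real numbers such that v(x)·u(y)·v(z) = u(z')·v(y')·u(x') in SL(2,ℝ), and it is given explicitly by x' = xy/(x + xyz + z), y' = x + xyz + z, z' = yz/(x + xyz + z). -/
/- STATEMENT 1: For every triple (x,y,z) of positive reals there is a unique triple
(x',y',z') of positive reals with v(x)·u(y)·v(z) = u(z')·v(y')·u(x'), given explicitly by
x' = xy/(x+xyz+z), y' = x+xyz+z, z' = yz/(x+xyz+z). -/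

noncomputable section

def u (x : ℝ) : Matrix.SpecialLinearGroup (Fin 2) ℝ :=
  ⟨!![1, x; 0, 1], by simp [Matrix.det_fin_two_of]⟩

def v (x : ℝ) : Matrix.SpecialLinearGroup (Fin 2) ℝ :=
  ⟨!![1, 0; x, 1], by simp [Matrix.det_fin_two_of]⟩

theorem vuv_eq_uvu_iff (x y z a b c : ℝ) :
    v x * u y * v z = u c * v b * u a ↔
      1 + y * z = 1 + c * b ∧ y = (1 + c * b) * a + c ∧
        x + (x * y + 1) * z = b ∧ x * y + 1 = b * a + 1 := by
  simp only [Matrix.SpecialLinearGroup.ext_iff, Matrix.SpecialLinearGroup.coe_mul]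
  simp [u, v, Fin.forall_fin_two, Matrix.mul_apply, Fin.sum_univ_two, and_assoc]

theorem vuv_to_uvu_factorization (x y z : ℝ) (hx : 0 < x) (hy : 0 < y) (hz : 0 < z) :
    (∃! p : ℝ × ℝ × ℝ, (0 < p.1 ∧ 0 < p.2.1 ∧ 0 < p.2.2) ∧
      v x * u y * v z = u p.2.2 * v p.2.1 * u p.1) ∧
    v x * u y * v z =
      u (y * z / (x + x * y * z + z)) * v (x + x * y * z + z) *
        u (x * y / (x + x * y * z + z)) := by
  have hb : 0 < x + x * y * z + z := by positivity
  have hfact : v x * u y * v z =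
      u (y * z / (x + x * y * z + z)) * v (x + x * y * z + z) *
        u (x * y / (x + x * y * z + z)) := by
    rw [vuv_eq_uvu_iff]
    refine ⟨?_, ?_, ?_, ?_⟩ <;> field_simp
    ring
  refine ⟨⟨(x * y / (x + x * y * z + z), x + x * y * z + z, y * z / (x + x * y * z + z)),
    ⟨⟨by positivity, hb, by positivity⟩, hfact⟩, ?_⟩, hfact⟩
  rintro ⟨a, b, c⟩ ⟨-, h⟩
  obtain ⟨hc, -, hb', ha⟩ := (vuv_eq_uvu_iff ..).1 h
  obtain rfl : b = x + x * y * z + z := by linarith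
  simp only [Prod.mk.injEq, true_and, eq_div_iff hb.ne']
  constructor <;> linarith
end
end

section
/- The map R : (ℝ_{>0})³ → (ℝ_{>0})³ defined by R(x, y, z) = (xy/(x + xyz + z), x + xyz + z, yz/(x + xyz + z)) is an involution, i.e. R(R(x, y, z)) = (x, y, z) for all positive reals x, y, z. -/
/- STATEMENT 2: The map R(x,y,z) = (xy/(x+xyz+z), x+xyz+z, yz/(x+xyz+z)) on positive
triples is an involution. -/

noncomputable section

/-- The map `R` on triples of (positive) reals. -/
def Rmap (p : ℝ × ℝ × ℝ) : ℝ × ℝ × ℝ :=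
  (p.1 * p.2.1 / (p.1 + p.1 * p.2.1 * p.2.2 + p.2.2),
   p.1 + p.1 * p.2.1 * p.2.2 + p.2.2,
   p.2.1 * p.2.2 / (p.1 + p.1 * p.2.1 * p.2.2 + p.2.2))

theorem Rmap_involution (x y z : ℝ) (hx : 0 < x) (hy : 0 < y) (hz : 0 < z) :
    Rmap (Rmap (x, y, z)) = (x, y, z) := by
  have hD : x + x * y * z + z ≠ 0 := by positivity
  have hy' : y ≠ 0 := hy.ne'
  have hmid : x * y / (x + x * y * z + z)
      + x * y / (x + x * y * z + z) * (x + x * y * z + z) * (y * z / (x + x * y * z + z))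
      + y * z / (x + x * y * z + z) = y := by
    rw [div_mul_cancel₀ _ hD, ← mul_div_assoc, ← add_div, ← add_div, div_eq_iff hD]
    ring
  simp only [Rmap, hmid, Prod.mk.injEq, true_and]
  rw [div_mul_cancel₀ _ hD, mul_div_cancel₀ _ hD]
  exact ⟨mul_div_cancel_right₀ x hy', mul_div_cancel_left₀ z hy'⟩
end
end

section
/- The map R solves the set-theoretical tetrahedron equation: as maps from (ℝ_{>0})⁶ to itself, R₁₂₃ ∘ R₁₄₅ ∘ R₂₄₆ ∘ R₃₅₆ = R₃₅₆ ∘ R₂₄₆ ∘ R₁₄₅ ∘ R₁₂₃, where Rᵢⱼₖ denotes the map acting as R on the coordinates (xᵢ, xⱼ, xₖ) of (x₁, …, x₆) ∈ (ℝ_{>0})⁶ and as the identity on the remaining coordinates. -/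
/- STATEMENT 3: The map R solves the set-theoretical tetrahedron equation
R₁₂₃ ∘ R₁₄₅ ∘ R₂₄₆ ∘ R₃₅₆ = R₃₅₆ ∘ R₂₄₆ ∘ R₁₄₅ ∘ R₁₂₃ on (ℝ_{>0})⁶. -/

noncomputable section

/-- `RAct i j k` acts as `R` on coordinates `i, j, k` and as the identity elsewhere. -/
def RAct (i j k : Fin 6) (f : Fin 6 → ℝ) : Fin 6 → ℝ := fun l =>
  if l = i then (Rmap (f i, f j, f k)).1
  else if l = j then (Rmap (f i, f j, f k)).2.1
  else if l = k then (Rmap (f i, f j, f k)).2.2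
  else f l

/-- Common value of both sides of the tetrahedron equation, where `Q`, `T`, `U` are the polynomials
occurring as its numerators and denominators. -/
def tetrahedronValue (a b c d e g : ℝ) : Fin 6 → ℝ :=
  let Q := b * (c + c * e * g + g) + b * d * e * g + e * g
  let T := a + a * Q + (c + c * e * g + g)
  let U := a * b * (1 + c * e) + a * e * (b * d + 1) + c * e
  ![a * b * d / U, U / T, b * c * d * e * T / (Q * U), T, Q / T, d * e * g / Q]

theorem RAct_012 (a b c d e g : ℝ) :
    RAct 0 1 2 ![a, b, c, d, e, g] =
      ![a * b / (a + a * b * c + c), a + a * b * c + c, b * c / (a + a * b * c + c), d, e, g] := by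
  ext l; fin_cases l <;> simp [RAct, Rmap]

theorem RAct_034 (a b c d e g : ℝ) :
    RAct 0 3 4 ![a, b, c, d, e, g] =
      ![a * d / (a + a * d * e + e), b, c, a + a * d * e + e, d * e / (a + a * d * e + e), g] := by
  ext l; fin_cases l <;> simp [RAct, Rmap]

theorem RAct_135 (a b c d e g : ℝ) :
    RAct 1 3 5 ![a, b, c, d, e, g] =
      ![a, b * d / (b + b * d * g + g), c, b + b * d * g + g, e, d * g / (b + b * d * g + g)] := by
  ext l; fin_cases l <;> simp [RAct, Rmap]

theorem RAct_245 (a b c d e g : ℝ) :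
    RAct 2 4 5 ![a, b, c, d, e, g] =
      ![a, b, c * e / (c + c * e * g + g), d, c + c * e * g + g, e * g / (c + c * e * g + g)] := by
  ext l; fin_cases l <;> simp [RAct, Rmap]

theorem RAct_012_034_135_245 {a b c d e g : ℝ} (ha : 0 < a) (hb : 0 < b) (hc : 0 < c)
    (hd : 0 < d) (he : 0 < e) (hg : 0 < g) :
    RAct 0 1 2 (RAct 0 3 4 (RAct 1 3 5 (RAct 2 4 5 ![a, b, c, d, e, g]))) =
      tetrahedronValue a b c d e g := by
  simp only [tetrahedronValue]
  set P := c + c * e * g + g with hP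
  set Q := b * P + b * d * e * g + e * g with hQ
  set T := a + a * Q + P with hT
  set U := a * b * (1 + c * e) + a * e * (b * d + 1) + c * e with hU
  have hP0 : 0 < P := by positivity
  have hQ0 : 0 < Q := by positivity
  have hT0 : 0 < T := by positivity
  have hU0 : 0 < U := by positivity
  have h₂ : b + b * d * (e * g / P) + e * g / P = Q / P := by rw [hQ]; field_simp
  have h₃ : a + a * (Q / P) * P + P = T := by rw [hT]; field_simp
  have h₄ : a * (Q / P) / T + a * (Q / P) / T * (b * d / (Q / P)) * (c * e / P) + c * e / P
      = U / T := by
    field_simp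
    rw [hU, hT, hQ, hP]; ring
  rw [RAct_245, ← hP, RAct_135, h₂, RAct_034, h₃, RAct_012, h₄]
  ext l; fin_cases l <;> dsimp <;> field_simp

theorem RAct_245_135_034_012 {a b c d e g : ℝ} (ha : 0 < a) (hb : 0 < b) (hc : 0 < c)
    (hd : 0 < d) (he : 0 < e) (hg : 0 < g) :
    RAct 2 4 5 (RAct 1 3 5 (RAct 0 3 4 (RAct 0 1 2 ![a, b, c, d, e, g]))) =
      tetrahedronValue a b c d e g := by
  simp only [tetrahedronValue]
  set Q := b * (c + c * e * g + g) + b * d * e * g + e * g with hQ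
  set T := a + a * Q + (c + c * e * g + g) with hT
  set U := a * b * (1 + c * e) + a * e * (b * d + 1) + c * e with hU
  set P := a + a * b * c + c with hP
  have hP0 : 0 < P := by positivity
  have hQ0 : 0 < Q := by positivity
  have hT0 : 0 < T := by positivity
  have hU0 : 0 < U := by positivity
  have h₂ : a * b / P + a * b / P * d * e + e = U / P := by
    field_simp
    rw [hU, hP]; ring
  have h₃ : P + P * (U / P) * g + g = T := by
    field_simp
    rw [hT, hU, hP, hQ]; ring
  have h₄ : b * c / P + b * c / P * (d * e / (U / P)) * (U / P * g / T) + U / P * g / T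
      = Q / T := by
    field_simp
    rw [hT, hU, hP, hQ]; ring
  rw [RAct_012, ← hP, RAct_034, h₂, RAct_135, h₃, RAct_245, h₄]
  ext l; fin_cases l <;> dsimp <;> field_simp

theorem tetrahedron_equation (f : Fin 6 → ℝ) (hf : ∀ i, 0 < f i) :
    RAct 0 1 2 (RAct 0 3 4 (RAct 1 3 5 (RAct 2 4 5 f))) =
      RAct 2 4 5 (RAct 1 3 5 (RAct 0 3 4 (RAct 0 1 2 f))) := by
  have hvec : f = ![f 0, f 1, f 2, f 3, f 4, f 5] := by
    ext l; fin_cases l <;> rfl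
  rw [hvec, RAct_012_034_135_245 (hf 0) (hf 1) (hf 2) (hf 3) (hf 4) (hf 5),
    RAct_245_135_034_012 (hf 0) (hf 1) (hf 2) (hf 3) (hf 4) (hf 5)]
end
end

section
/- For every positive real number x, the path γₓ : [0, 1] → SL(2,ℝ) defined by γₓ(t) = (v(−xt)·u(2t/x))², which runs from the identity matrix I to −I, is path-homotopic (homotopic relative to its endpoints) to the path ω₁ : [0, 1] → SL(2,ℝ), ω₁(t) = [[cos(πt), sin(πt)], [−sin(πt), cos(πt)]]. (Equivalently, the lift of γₓ to the universal cover of PSL(2,ℝ) represents the generator Φ(1) of the fundamental group of PSL(2,ℝ).) -/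
/- STATEMENT 5: For every positive real x, the path γₓ(t) = (v(−xt)·u(2t/x))² in SL(2,ℝ),
running from I to −I, is path-homotopic (rel endpoints) to
ω₁(t) = [[cos πt, sin πt], [−sin πt, cos πt]]. -/

noncomputable section

open Real

/-- The rotation matrix `[[cos θ, sin θ], [−sin θ, cos θ]]` as an element of SL(2,ℝ). -/
def rotSL (θ : ℝ) : Matrix.SpecialLinearGroup (Fin 2) ℝ :=
  ⟨!![Real.cos θ, Real.sin θ; -Real.sin θ, Real.cos θ], by
    simp [Matrix.det_fin_two_of]; ring_nf; rw [add_comm]; exact Real.sin_sq_add_cos_sq θ⟩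

/-- The element −I of SL(2,ℝ). -/
def negI : Matrix.SpecialLinearGroup (Fin 2) ℝ :=
  ⟨!![-1, 0; 0, -1], by simp [Matrix.det_fin_two_of]⟩

/-- The standard topology on SL(2,ℝ), induced from the space of 2×2 real matrices. -/
instance : TopologicalSpace (Matrix.SpecialLinearGroup (Fin 2) ℝ) :=
  TopologicalSpace.induced (fun g => (g : Matrix (Fin 2) (Fin 2) ℝ)) inferInstance

/-- The matrix `[[p + q, k r], [-r / k, p - q]]` of half-trace `p`, where `r = √(1 - p² + q²)`. -/
def ellipticSL (p q k : ℝ) (hp : p ^ 2 ≤ 1) (hk : k ≠ 0) :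
    Matrix.SpecialLinearGroup (Fin 2) ℝ :=
  ⟨!![p + q, k * √(1 - p ^ 2 + q ^ 2); -(√(1 - p ^ 2 + q ^ 2) / k), p - q], by
    have h : √(1 - p ^ 2 + q ^ 2) ^ 2 = 1 - p ^ 2 + q ^ 2 :=
      Real.sq_sqrt (by nlinarith [sq_nonneg q])
    rw [Matrix.det_fin_two_of]
    field_simp
    linear_combination h⟩

/-- An element of SL(2,ℝ) of trace zero squares to `-I`. -/
theorem sq_eq_negI_of_trace_eq_zero {g : Matrix.SpecialLinearGroup (Fin 2) ℝ}
    (hg : g.1.trace = 0) : g ^ 2 = negI := by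
  have hdet := g.2
  rw [Matrix.det_fin_two] at hdet
  rw [Matrix.trace_fin_two] at hg
  ext i j
  fin_cases i <;> fin_cases j <;> simp [sq, Matrix.mul_apply, Fin.sum_univ_two, negI] <;>
    grind

theorem rotSL_sq (θ : ℝ) : rotSL θ ^ 2 = rotSL (2 * θ) := by
  ext i j
  rw [sq, Matrix.SpecialLinearGroup.coe_mul, Matrix.mul_apply, Fin.sum_univ_two]
  fin_cases i <;> fin_cases j <;>
    simp [rotSL, Real.cos_two_mul', Real.sin_two_mul] <;>
    ring

theorem ellipticSL_one_zero {k : ℝ} (hp : (1 : ℝ) ^ 2 ≤ 1) (hk : k ≠ 0) :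
    ellipticSL 1 0 k hp hk = 1 := by
  ext i j
  fin_cases i <;> fin_cases j <;> simp [ellipticSL]

theorem ellipticSL_zero_sq {q k : ℝ} (hp : (0 : ℝ) ^ 2 ≤ 1) (hk : k ≠ 0) :
    ellipticSL 0 q k hp hk ^ 2 = negI :=
  sq_eq_negI_of_trace_eq_zero (by simp [ellipticSL, Matrix.trace_fin_two])

theorem ellipticSL_eq_v_mul_u {x t : ℝ} (hx : 0 < x) (ht : 0 ≤ t) (hp : (1 - t ^ 2) ^ 2 ≤ 1)
    (hk : √2 / x ≠ 0) :
    ellipticSL (1 - t ^ 2) (t ^ 2) (√2 / x) hp hk = v (-(x * t)) * u (2 * t / x) := by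
  have hr : √(1 - (1 - t ^ 2) ^ 2 + (t ^ 2) ^ 2) = √2 * t := by
    rw [show 1 - (1 - t ^ 2) ^ 2 + (t ^ 2) ^ 2 = 2 * t ^ 2 by ring,
      Real.sqrt_mul (by norm_num), Real.sqrt_sq ht]
  have h2 : √2 ^ 2 = (2 : ℝ) := Real.sq_sqrt (by norm_num)
  have h2' : √2 ≠ (0 : ℝ) := by positivity
  ext i j
  rw [Matrix.SpecialLinearGroup.coe_mul, Matrix.mul_apply, Fin.sum_univ_two]
  fin_cases i <;> fin_cases j <;> simp [ellipticSL, u, v, hr] <;> field_simp <;> grind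

theorem ellipticSL_eq_rotSL {θ : ℝ} (hθ : 0 ≤ Real.sin θ) (hp : Real.cos θ ^ 2 ≤ 1)
    (hk : (1 : ℝ) ≠ 0) : ellipticSL (Real.cos θ) 0 1 hp hk = rotSL θ := by
  have hr : √(1 - Real.cos θ ^ 2) = Real.sin θ := by
    rw [← Real.sin_sq, Real.sqrt_sq hθ]
  ext i j
  fin_cases i <;> fin_cases j <;> simp [ellipticSL, rotSL, hr]

theorem continuous_ellipticSL_sq {X : Type*} [TopologicalSpace X] {p q k : X → ℝ}
    (hpc : Continuous p) (hqc : Continuous q) (hkc : Continuous k)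
    (hp : ∀ a, p a ^ 2 ≤ 1) (hk : ∀ a, k a ≠ 0) :
    Continuous fun a => ellipticSL (p a) (q a) (k a) (hp a) (hk a) ^ 2 := by
  refine continuous_induced_rng.2 ?_
  have hmat : Continuous fun a => (ellipticSL (p a) (q a) (k a) (hp a) (hk a)).1 := by
    refine continuous_matrix fun i j => ?_
    fin_cases i <;> fin_cases j <;> simp only [ellipticSL] <;> simp <;> fun_prop (disch := simpa)
  exact (hmat.pow 2).congr fun a => by simp

theorem sq_convexCombo_le_one {a b s : ℝ} (ha : a ^ 2 ≤ 1) (hb : b ^ 2 ≤ 1) (hs : 0 ≤ s)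
    (hs' : s ≤ 1) : ((1 - s) * a + s * b) ^ 2 ≤ 1 := by
  rw [sq_le_one_iff_abs_le_one, abs_le] at *
  constructor <;> nlinarith

theorem gamma_homotopic_omega_one (x : ℝ) (hx : 0 < x)
    (γ ω : Path (1 : Matrix.SpecialLinearGroup (Fin 2) ℝ) negI)
    (hγ : ∀ t : unitInterval, γ t = (v (-(x * t)) * u (2 * t / x)) ^ 2)
    (hω : ∀ t : unitInterval, ω t = rotSL (π * t)) :
    γ.Homotopic ω := by
  have hk (s : unitInterval) : (1 - (s : ℝ)) * (√2 / x) + s ≠ 0 := by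
    have h : 0 < √2 / x := by positivity
    rcases s.2.1.eq_or_lt with hs | hs
    · simpa [← hs] using h.ne'
    · have := mul_nonneg (sub_nonneg.2 s.2.2) h.le
      positivity
  have hp (s t : unitInterval) :
      ((1 - (s : ℝ)) * (1 - (t : ℝ) ^ 2) + s * Real.cos (π * t / 2)) ^ 2 ≤ 1 := by
    refine sq_convexCombo_le_one ?_ (Real.cos_sq_le_one _) s.2.1 s.2.2
    have := t.2.1
    have := t.2.2
    rw [sq_le_one_iff_abs_le_one, abs_le]
    constructor <;> nlinarith
  refine ⟨{
    toFun := fun a => ellipticSL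
      ((1 - (a.1 : ℝ)) * (1 - (a.2 : ℝ) ^ 2) + a.1 * Real.cos (π * a.2 / 2))
      ((1 - (a.1 : ℝ)) * (a.2 : ℝ) ^ 2) ((1 - (a.1 : ℝ)) * (√2 / x) + a.1)
      (hp a.1 a.2) (hk a.1) ^ 2
    continuous_toFun := continuous_ellipticSL_sq (by fun_prop) (by fun_prop) (by fun_prop) _ _
    map_zero_left := fun t => ?_
    map_one_left := fun t => ?_
    prop' := fun s t ht => ?_ }⟩
  · simp only [Path.coe_toContinuousMap, hγ]
    rw [← ellipticSL_eq_v_mul_u hx t.2.1 (by simpa using hp 0 t) (by simpa using hk 0)]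
    simp
  · have hsin : 0 ≤ Real.sin (π * t / 2) := by
      have := t.2.1
      have := t.2.2
      apply Real.sin_nonneg_of_nonneg_of_le_pi
      · positivity
      · nlinarith [Real.pi_pos]
    have hrot : rotSL (π * t) = rotSL (π * t / 2) ^ 2 := by
      rw [rotSL_sq, mul_div_cancel₀ _ two_ne_zero]
    simp only [Path.coe_toContinuousMap, hω]
    rw [hrot, ← ellipticSL_eq_rotSL hsin (Real.cos_sq_le_one _) one_ne_zero]
    simp
  · rcases ht with rfl | rfl
    · simp [ellipticSL_one_zero]
    · simp [ellipticSL_zero_sq]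
end
end

section
/- Let (x₁, x₂, x₃) be a triple of positive reals and let (x₁', x₂', x₃') be the unique triple of positive reals with v(x₁)·u(x₂)·v(x₃)·u(−x₃')·v(−x₂')·u(−x₁') = I in SL(2,ℝ). Then the loop α at the identity of SL(2,ℝ) obtained by concatenating the six paths t ↦ v(t·x₁), t ↦ v(x₁)·u(t·x₂), t ↦ v(x₁)·u(x₂)·v(t·x₃), t ↦ v(x₁)·u(x₂)·v(x₃)·u(−t·x₃'), t ↦ v(x₁)·u(x₂)·v(x₃)·u(−x₃')·v(−t·x₂'), and t ↦ v(x₁)·u(x₂)·v(x₃)·u(−x₃')·v(−x₂')·u(−t·x₁') (for t ∈ [0, 1]) is null-homotopic, i.e. path-homotopic to the constant loop at the identity. -/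
/- STATEMENT 6: For positive reals (x₁,x₂,x₃) and the (unique) positive triple (y₁,y₂,y₃)
with v(x₁)·u(x₂)·v(x₃)·u(−y₃)·v(−y₂)·u(−y₁) = I, the loop at the identity of SL(2,ℝ)
obtained by concatenating the six straight-line factor paths is null-homotopic. -/

noncomputable section

theorem v_zero_zero (x : ℝ) : v x 0 0 = 1 := rfl

theorem v_zero_one (x : ℝ) : v x 0 1 = 0 := rfl

theorem mul_u_zero_zero (g : Matrix.SpecialLinearGroup (Fin 2) ℝ) (x : ℝ) :
    (g * u x) 0 0 = g 0 0 := by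
  rw [Matrix.SpecialLinearGroup.coe_mul, Matrix.mul_apply, Fin.sum_univ_two]
  change g 0 0 * 1 + g 0 1 * 0 = g 0 0
  ring

theorem mul_u_zero_one (g : Matrix.SpecialLinearGroup (Fin 2) ℝ) (x : ℝ) :
    (g * u x) 0 1 = g 0 0 * x + g 0 1 := by
  rw [Matrix.SpecialLinearGroup.coe_mul, Matrix.mul_apply, Fin.sum_univ_two]
  change g 0 0 * x + g 0 1 * 1 = _
  ring

theorem mul_v_zero_zero (g : Matrix.SpecialLinearGroup (Fin 2) ℝ) (x : ℝ) :
    (g * v x) 0 0 = g 0 0 + g 0 1 * x := by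
  rw [Matrix.SpecialLinearGroup.coe_mul, Matrix.mul_apply, Fin.sum_univ_two]
  change g 0 0 * 1 + g 0 1 * x = _
  ring

theorem mul_v_zero_one (g : Matrix.SpecialLinearGroup (Fin 2) ℝ) (x : ℝ) :
    (g * v x) 0 1 = g 0 1 := by
  rw [Matrix.SpecialLinearGroup.coe_mul, Matrix.mul_apply, Fin.sum_univ_two]
  change g 0 0 * 0 + g 0 1 * 1 = g 0 1
  ring

open Matrix in
/-- A loop at the identity of `SL(2,ℝ)` whose upper left entry stays positive is null-homotopic:
the matrices with this property are parametrized by the convex set of triples `(a, b, c)` with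
`0 < a`, and the loop is contracted along segments there. -/
theorem Path.homotopic_refl_of_entry_pos (q : Path (1 : SpecialLinearGroup (Fin 2) ℝ) 1)
    (hq : ∀ t, 0 < q t 0 0) : q.Homotopic (Path.refl 1) := by
  have hcoe : Continuous fun t => (q t).1 := continuous_induced_dom.comp q.continuous
  have hentry (i j : Fin 2) : Continuous fun p : unitInterval × unitInterval => q p.2 i j :=
    (hcoe.matrix_elem i j).comp continuous_snd
  have hs : Continuous fun p : unitInterval × unitInterval => (p.1 : ℝ) := by fun_prop
  let a (p : unitInterval × unitInterval) : ℝ := (1 - p.1) * q p.2 0 0 + p.1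
  let b (p : unitInterval × unitInterval) : ℝ := (1 - p.1) * q p.2 0 1
  let c (p : unitInterval × unitInterval) : ℝ := (1 - p.1) * q p.2 1 0
  have ha : Continuous a := ((continuous_const.sub hs).mul (hentry 0 0)).add hs
  have hb : Continuous b := (continuous_const.sub hs).mul (hentry 0 1)
  have hc : Continuous c := (continuous_const.sub hs).mul (hentry 1 0)
  have ha_pos (p) : 0 < a p := by
    have h₀ := p.1.2.1
    have h₁ := p.1.2.2
    have h := hq p.2
    rcases h₁.eq_or_lt with h₁ | h₁
    · simp [a, h₁]
    · exact add_pos_of_pos_of_nonneg (mul_pos (sub_pos.2 h₁) h) h₀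
  let H (p : unitInterval × unitInterval) : SpecialLinearGroup (Fin 2) ℝ :=
    ⟨!![a p, b p; c p, (1 + b p * c p) / a p], by
      rw [det_fin_two_of, mul_div_cancel₀ _ (ha_pos p).ne']
      ring⟩
  have hH : Continuous H := by
    refine continuous_induced_rng.2 (continuous_matrix fun i j => ?_)
    fin_cases i <;> fin_cases j
    · exact ha
    · exact hb
    · exact hc
    · exact (continuous_const.add (hb.mul hc)).div ha fun p => (ha_pos p).ne'
  have hH_zero (t) : H (0, t) = q t := by
    have hdet := (q t).2
    rw [det_fin_two] at hdet
    ext i j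
    fin_cases i <;> fin_cases j
    · simp [H, a]
    · simp [H, b]
    · simp [H, c]
    · have h := (hq t).ne'
      have : (1 + q t 0 1 * q t 1 0) / q t 0 0 = q t 1 1 := by
        rw [div_eq_iff h]
        linarith
      simpa [H, a, b, c] using this
  have hH_eq_one (p) (h : p.1 = 1 ∨ q p.2 = 1) : H p = 1 := by
    ext i j
    rcases h with h | h <;> fin_cases i <;> fin_cases j <;> simp [H, a, b, c, h]
  refine ⟨⟨⟨⟨H, hH⟩, hH_zero, fun t => hH_eq_one _ (Or.inl rfl)⟩, fun s t ht => ?_⟩⟩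
  have ht : q t = 1 := by
    rcases ht with rfl | rfl
    · exact q.source
    · exact q.target
  exact (hH_eq_one (s, t) (Or.inr ht)).trans ht.symm

theorem hexagon_loop_nullhomotopic (x₁ x₂ x₃ y₁ y₂ y₃ : ℝ)
    (hx₁ : 0 < x₁) (hx₂ : 0 < x₂) (hx₃ : 0 < x₃)
    (hy₁ : 0 < y₁) (hy₂ : 0 < y₂) (hy₃ : 0 < y₃)
    (heq : v x₁ * u x₂ * v x₃ * u (-y₃) * v (-y₂) * u (-y₁) =
      (1 : Matrix.SpecialLinearGroup (Fin 2) ℝ))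
    (p₁ : Path (1 : Matrix.SpecialLinearGroup (Fin 2) ℝ) (v x₁))
    (p₂ : Path (v x₁) (v x₁ * u x₂))
    (p₃ : Path (v x₁ * u x₂) (v x₁ * u x₂ * v x₃))
    (p₄ : Path (v x₁ * u x₂ * v x₃) (v x₁ * u x₂ * v x₃ * u (-y₃)))
    (p₅ : Path (v x₁ * u x₂ * v x₃ * u (-y₃)) (v x₁ * u x₂ * v x₃ * u (-y₃) * v (-y₂)))
    (p₆ : Path (v x₁ * u x₂ * v x₃ * u (-y₃) * v (-y₂))
      (1 : Matrix.SpecialLinearGroup (Fin 2) ℝ))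
    (hp₁ : ∀ t : unitInterval, p₁ t = v (t * x₁))
    (hp₂ : ∀ t : unitInterval, p₂ t = v x₁ * u (t * x₂))
    (hp₃ : ∀ t : unitInterval, p₃ t = v x₁ * u x₂ * v (t * x₃))
    (hp₄ : ∀ t : unitInterval, p₄ t = v x₁ * u x₂ * v x₃ * u (-(t * y₃)))
    (hp₅ : ∀ t : unitInterval, p₅ t = v x₁ * u x₂ * v x₃ * u (-y₃) * v (-(t * y₂)))
    (hp₆ : ∀ t : unitInterval,
      p₆ t = v x₁ * u x₂ * v x₃ * u (-y₃) * v (-y₂) * u (-(t * y₁))) :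
    (((((p₁.trans p₂).trans p₃).trans p₄).trans p₅).trans p₆).Homotopic
      (Path.refl (1 : Matrix.SpecialLinearGroup (Fin 2) ℝ)) := by
  have h_end : (v x₁ * u x₂ * v x₃ * u (-y₃) * v (-y₂)) 0 0 = 1 := by
    rw [← mul_u_zero_zero _ (-y₁), heq]
    rfl
  apply Path.homotopic_refl_of_entry_pos
  have h_range : Set.range (((((p₁.trans p₂).trans p₃).trans p₄).trans p₅).trans p₆) ⊆
      {g : Matrix.SpecialLinearGroup (Fin 2) ℝ | 0 < g 0 0} := by
    simp only [Path.trans_range, Set.union_subset_iff, Set.range_subset_iff, Set.mem_ofPred_eq]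
    refine ⟨⟨⟨⟨⟨fun t => ?_, fun t => ?_⟩, fun t => ?_⟩, fun t => ?_⟩, fun t => ?_⟩, fun t => ?_⟩
    · rw [hp₁, v_zero_zero]
      exact one_pos
    · rw [hp₂, mul_u_zero_zero, v_zero_zero]
      exact one_pos
    · have h := t.2.1
      rw [hp₃, mul_v_zero_zero, mul_u_zero_zero, mul_u_zero_one, v_zero_zero, v_zero_one]
      positivity
    · rw [hp₄, mul_u_zero_zero, mul_v_zero_zero, mul_u_zero_zero, mul_u_zero_one, v_zero_zero,
        v_zero_one]
      positivity
    · have h_start : 1 < (v x₁ * u x₂ * v x₃ * u (-y₃)) 0 0 := by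
        rw [mul_u_zero_zero, mul_v_zero_zero, mul_u_zero_zero, mul_u_zero_one, v_zero_zero,
          v_zero_one]
        nlinarith [mul_pos hx₂ hx₃]
      rw [mul_v_zero_zero] at h_end
      rw [hp₅, mul_v_zero_zero]
      nlinarith [mul_nonneg (sub_nonneg.2 t.2.2) (sub_pos.2 h_start).le]
    · rw [hp₆, mul_u_zero_zero, h_end]
      exact one_pos
  exact fun t => h_range ⟨t, rfl⟩
end
end

section
/- For every triple (x₁, x₂, x₃) of positive real numbers and every ε ∈ {−1, 1}, there exists a unique triple (x̄₁, x̄₂, x̄₃) of real numbers such that v(x₁)·u(−x̄₃)·v(x₂)·u(−x̄₁)·v(x₃)·u(−x̄₂) = ε·I in SL(2,ℝ). -/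
/- STATEMENT 7: For all positive reals x₁, x₂, x₃ and every ε ∈ {−1, 1}, there is a unique
triple (x̄₁, x̄₂, x̄₃) of reals with
v(x₁)·u(−x̄₃)·v(x₂)·u(−x̄₁)·v(x₃)·u(−x̄₂) = ε·I in SL(2,ℝ). -/

noncomputable section

theorem coe_u (x : ℝ) : (u x : Matrix (Fin 2) (Fin 2) ℝ) = !![1, x; 0, 1] := rfl

theorem coe_v (x : ℝ) : (v x : Matrix (Fin 2) (Fin 2) ℝ) = !![1, 0; x, 1] := rfl

theorem hexagon_factorization_existsUnique (x₁ x₂ x₃ : ℝ)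
    (h₁ : 0 < x₁) (h₂ : 0 < x₂) (h₃ : 0 < x₃)
    (ε : ℝ) (hε : ε = 1 ∨ ε = -1) :
    ∃! b : ℝ × ℝ × ℝ,
      ((v x₁ * u (-b.2.2) * v x₂ * u (-b.1) * v x₃ * u (-b.2.1) :
          Matrix.SpecialLinearGroup (Fin 2) ℝ) : Matrix (Fin 2) (Fin 2) ℝ) =
        ε • (1 : Matrix (Fin 2) (Fin 2) ℝ) := by
  have hsq : ε * ε = 1 := by rcases hε with rfl | rfl <;> norm_num
  refine ⟨((x₂ + x₃ + ε * x₁) / (x₂ * x₃), (x₁ + x₃ + ε * x₂) / (x₁ * x₃),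
    (x₁ + x₂ + ε * x₃) / (x₁ * x₂)), ?_, ?_⟩
  · ext i j
    fin_cases i <;> fin_cases j <;>
      simp [coe_u, coe_v, Matrix.mul_apply, Fin.sum_univ_two] <;> field_simp <;>
      rcases hε with rfl | rfl <;> ring
  · rintro ⟨q, r, p⟩ h
    have e00 := congrFun (congrFun h 0) 0
    have e01 := congrFun (congrFun h 0) 1
    have e10 := congrFun (congrFun h 1) 0
    have e11 := congrFun (congrFun h 1) 1
    simp [coe_u, coe_v, Matrix.mul_apply, Fin.sum_univ_two] at e00 e01 e10 e11
    -- entries of `v x₁ * u (-p) * v x₂ = ε • (u r * v (-x₃) * u q)`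
    have a10 : x₁ + x₂ - x₁ * x₂ * p = -(ε * x₃) := by
      linear_combination (1 - r * x₃) * e10 - x₃ * e11
    have a11 : 1 - x₁ * p = ε * (1 - x₃ * q) := by
      linear_combination (q * (1 - r * x₃) + r) * e10 + (1 - x₃ * q) * e11
    have a00 : 1 - p * x₂ = ε * (1 - r * x₃) := by
      linear_combination (1 - r * x₃) * e00 - x₃ * e01
    simp only [Prod.mk.injEq]
    refine ⟨?_, ?_, ?_⟩
    · rw [eq_div_iff (by positivity)]
      linear_combination (ε * x₂) * a11 - ε * a10 + (x₂ * x₃ * -q + x₂ + x₃) * hsq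
    · rw [eq_div_iff (by positivity)]
      linear_combination (ε * x₁) * a00 - ε * a10 + (x₁ * x₃ * -r + x₁ + x₃) * hsq
    · rw [eq_div_iff (by positivity)]
      linear_combination -a10
end
end

section
/- Let (x₁, x₂, x₃) be a triple of positive reals and let (x̄₁, x̄₂, x̄₃) be the unique triple of reals with v(x₁)·u(−x̄₃)·v(x₂)·u(−x̄₁)·v(x₃)·u(−x̄₂) = I in SL(2,ℝ). Then the loop β at the identity of SL(2,ℝ) obtained by concatenating the six paths t ↦ v(t·x₁), t ↦ v(x₁)·u(−t·x̄₃), t ↦ v(x₁)·u(−x̄₃)·v(t·x₂), t ↦ v(x₁)·u(−x̄₃)·v(x₂)·u(−t·x̄₁), t ↦ v(x₁)·u(−x̄₃)·v(x₂)·u(−x̄₁)·v(t·x₃), and t ↦ v(x₁)·u(−x̄₃)·v(x₂)·u(−x̄₁)·v(x₃)·u(−t·x̄₂) (for t ∈ [0, 1]) is path-homotopic to the loop ω₋₂ : t ↦ [[cos(2πt), −sin(2πt)], [sin(2πt), cos(2πt)]]. (This is the case ε = 1 of the statement that the lift of β to the universal cover of PSL(2,ℝ) represents the class Φ(−(3+ε)/2).)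 -/
/- STATEMENT 8: For positive reals (x₁,x₂,x₃) and the (unique) real triple (b₁,b₂,b₃) with
v(x₁)·u(−b₃)·v(x₂)·u(−b₁)·v(x₃)·u(−b₂) = I, the loop β at the identity of SL(2,ℝ) obtained
by concatenating the six factor paths is path-homotopic to
ω₋₂(t) = [[cos 2πt, −sin 2πt],[sin 2πt, cos 2πt]]. -/

noncomputable section

open Real

/-- Iwasawa coordinates on SL(2,ℝ): `(l, θ, s)` is sent to the counterclockwise rotation by `θ`
times `[[exp l, s], [0, exp (-l)]]`. -/
def iwasawa (a : ℝ × ℝ × ℝ) : Matrix.SpecialLinearGroup (Fin 2) ℝ :=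
  ⟨!![exp a.1 * cos a.2.1, a.2.2 * cos a.2.1 - exp (-a.1) * sin a.2.1;
      exp a.1 * sin a.2.1, a.2.2 * sin a.2.1 + exp (-a.1) * cos a.2.1], by
    have h : exp a.1 * exp (-a.1) = 1 := by rw [← exp_add]; simp
    rw [Matrix.det_fin_two_of]
    linear_combination exp a.1 * exp (-a.1) * sin_sq_add_cos_sq a.2.1 + h⟩

theorem continuous_iwasawa : Continuous iwasawa := by
  refine continuous_induced_rng.2 (continuous_matrix fun i j => ?_)
  fin_cases i <;> fin_cases j <;> simp [iwasawa] <;> fun_prop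

theorem iwasawa_mul_u (l θ s y : ℝ) :
    iwasawa (l, θ, s) * u y = iwasawa (l, θ, s + exp l * y) := by
  ext i j
  rw [Matrix.SpecialLinearGroup.coe_mul]
  fin_cases i <;> fin_cases j <;> simp [iwasawa, u, Matrix.mul_apply] <;> ring

/-- The first column, read as a complex number, of `[[exp l, s], [0, exp (-l)]] * v y`. -/
def shearColumn (l s y : ℝ) : ℂ := ⟨exp l + s * y, exp (-l) * y⟩

theorem continuous_shearColumn (l s : ℝ) : Continuous (shearColumn l s) := by
  have h : shearColumn l s =
      fun y : ℝ => ((exp l + s * y : ℝ) : ℂ) + ((exp (-l) * y : ℝ) : ℂ) * Complex.I := by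
    ext y
    rw [← Complex.mk_eq_add_mul_I, shearColumn]
  rw [h]
  fun_prop

theorem shearColumn_zero (l s : ℝ) : shearColumn l s 0 = (exp l : ℝ) := by
  apply Complex.ext <;> simp [shearColumn, -Complex.ofReal_exp]

theorem shearColumn_mem_slitPlane (l s y : ℝ) : shearColumn l s y ∈ Complex.slitPlane := by
  rcases eq_or_ne y 0 with rfl | hy
  · rw [shearColumn_zero]
    exact Complex.ofReal_mem_slitPlane.2 (exp_pos l)
  · exact Complex.mem_slitPlane_iff.2 (Or.inr (mul_ne_zero (exp_pos _).ne' hy))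

/-- The Iwasawa coordinates of `iwasawa (l, θ, s) * v y` that are continuous in `y` and equal to
`(l, θ, s)` at `y = 0`. -/
def shear (l θ s y : ℝ) : ℝ × ℝ × ℝ :=
  (log ‖shearColumn l s y‖, θ + (shearColumn l s y).arg,
    ((exp l + s * y) * s + exp (-l) * y * exp (-l)) / ‖shearColumn l s y‖)

theorem continuous_shear (l θ s : ℝ) : Continuous (shear l θ s) := by
  have hz := continuous_shearColumn l s
  have h0 (y : ℝ) : ‖shearColumn l s y‖ ≠ 0 :=
    norm_ne_zero_iff.2 (Complex.slitPlane_ne_zero (shearColumn_mem_slitPlane l s y))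
  have harg : Continuous fun y => (shearColumn l s y).arg :=
    continuous_iff_continuousAt.2 fun y =>
      (Complex.continuousAt_arg (shearColumn_mem_slitPlane l s y)).comp hz.continuousAt
  exact (hz.norm.log h0).prodMk ((continuous_const.add harg).prodMk
    (Continuous.div (by fun_prop) hz.norm h0))

theorem shear_zero (l θ s : ℝ) : shear l θ s 0 = (l, θ, s) := by
  have h : ‖((exp l : ℝ) : ℂ)‖ = exp l := by
    rw [Complex.norm_real, norm_of_nonneg (exp_pos l).le]
  simp only [shear, shearColumn_zero, h, log_exp, Complex.arg_ofReal_of_nonneg (exp_pos l).le]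
  simp

theorem iwasawa_mul_v (l θ s y : ℝ) :
    iwasawa (l, θ, s) * v y = iwasawa (shear l θ s y) := by
  have hz := Complex.slitPlane_ne_zero (shearColumn_mem_slitPlane l s y)
  have hr : 0 < ‖shearColumn l s y‖ := norm_pos_iff.2 hz
  have hc : cos (shearColumn l s y).arg = (exp l + s * y) / ‖shearColumn l s y‖ :=
    Complex.cos_arg hz
  have hs : sin (shearColumn l s y).arg = exp (-l) * y / ‖shearColumn l s y‖ := Complex.sin_arg _
  have hn : ‖shearColumn l s y‖ ^ 2 = (exp l + s * y) ^ 2 + (exp (-l) * y) ^ 2 := by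
    rw [Complex.sq_norm, Complex.normSq_apply, shearColumn]
    ring
  have he : exp l * exp (-l) = 1 := by rw [← exp_add]; simp
  generalize hE : exp l = A at *
  generalize hE' : exp (-l) = E at *
  ext i j
  rw [Matrix.SpecialLinearGroup.coe_mul]
  fin_cases i <;> fin_cases j <;>
    simp [iwasawa, v, shear, Matrix.mul_apply, hE, hE', exp_neg (log _), exp_log hr, cos_add,
      sin_add, hc, hs] <;>
    generalize ‖shearColumn l s y‖ = r at * <;>
    field_simp
  · ring
  · rw [hn]
    linear_combination -(cos θ * E * y + sin θ * (A + s * y)) * he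
  · ring
  · rw [hn]
    linear_combination (cos θ * (A + s * y) - sin θ * E * y) * he

/-- The path `p` in SL(2,ℝ) is the image of some path from `a` to `c` in Iwasawa coordinates. -/
def LiftsTo {g h : Matrix.SpecialLinearGroup (Fin 2) ℝ} (p : Path g h) (a c : ℝ × ℝ × ℝ) : Prop :=
  ∃ q : Path a c, ∀ t, iwasawa (q t) = p t

namespace LiftsTo

variable {g h k : Matrix.SpecialLinearGroup (Fin 2) ℝ} {a b c : ℝ × ℝ × ℝ}

theorem source {p : Path g h} (H : LiftsTo p a c) : iwasawa a = g := by
  obtain ⟨q, hq⟩ := H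
  simpa using hq 0

theorem target {p : Path g h} (H : LiftsTo p a c) : iwasawa c = h := by
  obtain ⟨q, hq⟩ := H
  simpa using hq 1

theorem trans {p : Path g h} {p' : Path h k} (H : LiftsTo p a b) (H' : LiftsTo p' b c) :
    LiftsTo (p.trans p') a c := by
  obtain ⟨q, hq⟩ := H
  obtain ⟨q', hq'⟩ := H'
  refine ⟨q.trans q', fun t => ?_⟩
  rw [Path.trans_apply, Path.trans_apply]
  split_ifs
  exacts [hq _, hq' _]

/-- Paths with lifts having the same endpoints are homotopic, as the coordinate space is simply
connected. -/
theorem homotopic {p p' : Path g h} (H : LiftsTo p a c) (H' : LiftsTo p' a c) :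
    p.Homotopic p' := by
  obtain rfl := H.source
  obtain rfl := H.target
  obtain ⟨q, hq⟩ := H
  obtain ⟨q', hq'⟩ := H'
  obtain rfl : q.map continuous_iwasawa = p := Path.ext (funext hq)
  obtain rfl : q'.map continuous_iwasawa = p' := Path.ext (funext hq')
  exact (SimplyConnectedSpace.paths_homotopic q q').map ⟨iwasawa, continuous_iwasawa⟩

end LiftsTo

theorem exists_liftsTo_mul_u {g h : Matrix.SpecialLinearGroup (Fin 2) ℝ} {a : ℝ × ℝ × ℝ}
    (ha : iwasawa a = g) (y : ℝ) (p : Path g h) (hp : ∀ t : unitInterval, p t = g * u (-(t * y))) :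
    ∃ c, LiftsTo p a c ∧ c.2.1 = a.2.1 := by
  obtain ⟨l, θ, s⟩ := a
  refine ⟨(l, θ, s + exp l * (-y)), ⟨⟨⟨fun t => (l, θ, s + exp l * (-(t * y))), by fun_prop⟩,
    by simp, by simp⟩, fun t => ?_⟩, rfl⟩
  rw [hp, ← ha, iwasawa_mul_u]
  rfl

theorem exists_liftsTo_mul_v {g h : Matrix.SpecialLinearGroup (Fin 2) ℝ} {a : ℝ × ℝ × ℝ}
    (ha : iwasawa a = g) {x : ℝ} (hx : 0 < x) (p : Path g h)
    (hp : ∀ t : unitInterval, p t = g * v (t * x)) :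
    ∃ c, LiftsTo p a c ∧ a.2.1 < c.2.1 ∧ c.2.1 < a.2.1 + π := by
  obtain ⟨l, θ, s⟩ := a
  have him : 0 < (shearColumn l s x).im := mul_pos (exp_pos _) hx
  refine ⟨shear l θ s x, ⟨⟨⟨fun t => shear l θ s (t * x),
    (continuous_shear l θ s).comp (by fun_prop)⟩, by simp [shear_zero], by simp⟩, fun t => ?_⟩,
    ?_, ?_⟩
  · rw [hp, ← ha, iwasawa_mul_v]
    rfl
  · have : 0 < (shearColumn l s x).arg :=
      (Complex.arg_nonneg_iff.2 him.le).lt_of_ne' fun h => him.ne' (Complex.arg_eq_zero_iff.1 h).2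
    simpa [shear] using this
  · have : (shearColumn l s x).arg < π := Complex.arg_lt_pi_iff.2 (Or.inr him.ne')
    simpa [shear] using this

theorem iwasawa_zero : iwasawa (0, 0, 0) = 1 := by
  ext i j
  fin_cases i <;> fin_cases j <;> simp [iwasawa]

theorem eq_of_iwasawa_eq_one {a : ℝ × ℝ × ℝ} (ha : iwasawa a = 1) (h0 : 0 < a.2.1)
    (h3 : a.2.1 < 3 * π) : a = (0, 2 * π, 0) := by
  obtain ⟨l, θ, s⟩ := a
  have entry (i j : Fin 2) := congrArg (fun g => g.1 i j) ha
  have e00 := entry 0 0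
  have e01 := entry 0 1
  have e10 := entry 1 0
  simp [iwasawa] at e00 e01 e10 h0 h3
  have hcos : cos θ = 1 := by
    have h1 := sin_sq_add_cos_sq θ
    have h2 : 0 < cos θ := by
      by_contra! h
      nlinarith [exp_pos l]
    rw [e10] at h1
    nlinarith
  have hl : l = 0 := by simpa [hcos] using e00
  have hs : s = 0 := by simpa [hcos, e10] using e01
  obtain ⟨n, hn⟩ := (cos_eq_one_iff θ).1 hcos
  have hn0 : 0 < n := by
    by_contra! h
    have : (n : ℝ) ≤ 0 := by exact_mod_cast h
    nlinarith [pi_pos]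
  have hn2 : n < 2 := by
    by_contra! h
    have : (2 : ℝ) ≤ n := by exact_mod_cast h
    nlinarith [pi_pos]
  obtain rfl : n = 1 := by lia
  simp [hl, hs, ← hn]

theorem hexagon_loop_eps_one_homotopic (x₁ x₂ x₃ b₁ b₂ b₃ : ℝ)
    (hx₁ : 0 < x₁) (hx₂ : 0 < x₂) (hx₃ : 0 < x₃)
    (heq : v x₁ * u (-b₃) * v x₂ * u (-b₁) * v x₃ * u (-b₂) =
      (1 : Matrix.SpecialLinearGroup (Fin 2) ℝ))
    (p₁ : Path (1 : Matrix.SpecialLinearGroup (Fin 2) ℝ) (v x₁))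
    (p₂ : Path (v x₁) (v x₁ * u (-b₃)))
    (p₃ : Path (v x₁ * u (-b₃)) (v x₁ * u (-b₃) * v x₂))
    (p₄ : Path (v x₁ * u (-b₃) * v x₂) (v x₁ * u (-b₃) * v x₂ * u (-b₁)))
    (p₅ : Path (v x₁ * u (-b₃) * v x₂ * u (-b₁))
      (v x₁ * u (-b₃) * v x₂ * u (-b₁) * v x₃))
    (p₆ : Path (v x₁ * u (-b₃) * v x₂ * u (-b₁) * v x₃)
      (1 : Matrix.SpecialLinearGroup (Fin 2) ℝ))
    (hp₁ : ∀ t : unitInterval, p₁ t = v (t * x₁))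
    (hp₂ : ∀ t : unitInterval, p₂ t = v x₁ * u (-(t * b₃)))
    (hp₃ : ∀ t : unitInterval, p₃ t = v x₁ * u (-b₃) * v (t * x₂))
    (hp₄ : ∀ t : unitInterval, p₄ t = v x₁ * u (-b₃) * v x₂ * u (-(t * b₁)))
    (hp₅ : ∀ t : unitInterval, p₅ t = v x₁ * u (-b₃) * v x₂ * u (-b₁) * v (t * x₃))
    (hp₆ : ∀ t : unitInterval,
      p₆ t = v x₁ * u (-b₃) * v x₂ * u (-b₁) * v x₃ * u (-(t * b₂)))
    (ω : Path (1 : Matrix.SpecialLinearGroup (Fin 2) ℝ)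
      (1 : Matrix.SpecialLinearGroup (Fin 2) ℝ))
    (hω : ∀ t : unitInterval, ω t = rotSL (-(2 * π * t))) :
    (((((p₁.trans p₂).trans p₃).trans p₄).trans p₅).trans p₆).Homotopic ω := by
  obtain ⟨c₁, L₁, l₁, r₁⟩ := exists_liftsTo_mul_v iwasawa_zero hx₁ p₁ (by simpa using hp₁)
  obtain ⟨c₂, L₂, e₂⟩ := exists_liftsTo_mul_u L₁.target b₃ p₂ hp₂
  obtain ⟨c₃, L₃, l₃, r₃⟩ := exists_liftsTo_mul_v L₂.target hx₂ p₃ hp₃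
  obtain ⟨c₄, L₄, e₄⟩ := exists_liftsTo_mul_u L₃.target b₁ p₄ hp₄
  obtain ⟨c₅, L₅, l₅, r₅⟩ := exists_liftsTo_mul_v L₄.target hx₃ p₅ hp₅
  obtain ⟨c₆, L₆, e₆⟩ := exists_liftsTo_mul_u L₅.target b₂ p₆ hp₆
  obtain rfl := eq_of_iwasawa_eq_one L₆.target (by linarith) (by linarith)
  refine (((((L₁.trans L₂).trans L₃).trans L₄).trans L₅).trans L₆).homotopic
    ⟨⟨⟨fun t => (0, 2 * π * t, 0), by fun_prop⟩, by simp, by simp⟩, fun t => ?_⟩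
  rw [hω]
  ext i j
  fin_cases i <;> fin_cases j <;> simp [iwasawa, rotSL]
end
end

section
/- Let a, b, c, d, e, f be positive real numbers and let α, β, γ, δ ∈ {−1, 1}. Then the pair of equations α·b·d + β·a·c = γ·e·f and β·b·d + α·a·c = δ·e·f holds if and only if α·b·d + β·a·c = γ·e·f and α·β = γ·δ. (This is the signed Ptolemy relation governing the change of coordinates under a diagonal flip.) -/
/- STATEMENT 11: For positive reals a, b, c, d, e, f and signs α, β, γ, δ ∈ {−1, 1}, the pair
of equations α·b·d + β·a·c = γ·e·f and β·b·d + α·a·c = δ·e·f holds iff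
α·b·d + β·a·c = γ·e·f and α·β = γ·δ (the signed Ptolemy relation). -/

theorem signed_ptolemy_relation (a b c d e f : ℝ)
    (ha : 0 < a) (hb : 0 < b) (hc : 0 < c) (hd : 0 < d) (he : 0 < e) (hf : 0 < f)
    (α β γ δ : ℝ)
    (hα : α = 1 ∨ α = -1) (hβ : β = 1 ∨ β = -1) (hγ : γ = 1 ∨ γ = -1) (hδ : δ = 1 ∨ δ = -1) :
    (α * b * d + β * a * c = γ * e * f ∧ β * b * d + α * a * c = δ * e * f) ↔
      (α * b * d + β * a * c = γ * e * f ∧ α * β = γ * δ) := by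
  have sq_eq_one {x : ℝ} (hx : x = 1 ∨ x = -1) : x * x = 1 := mul_self_eq_one_iff.mpr hx
  have hα2 := sq_eq_one hα
  have hβ2 := sq_eq_one hβ
  have hγ2 := sq_eq_one hγ
  refine and_congr_right fun h => ?_
  have key : β * b * d + α * a * c = α * β * γ * (e * f) := by
    linear_combination α * β * h - β * b * d * hα2 - α * a * c * hβ2
  rw [key, mul_assoc δ e f, mul_left_inj' (mul_pos he hf).ne']
  constructor <;> intro h'
  · linear_combination γ * h' - α * β * hγ2
  · linear_combination γ * h' + δ * hγ2
end
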